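/- Let p₃₁, p₃₂, p₃₃, p₄₁, p₄₂, p₄₃, c₁, c₂, c₃ be reals with cⱼ > 0. If for every 1 ≤ ℓ ≤ 6 we have Σⱼ₌₁³ Σ_{α₃+2α₄=ℓ} cⱼ p₃ⱼ^{α₃} p₄ⱼ^{α₄}/(α₃! α₄!) = 0, then p₃ⱼ = p₄ⱼ = 0 for all j ∈ {1,2,3}. -/

import Mathlib

open Finset

/-!
Let `φ_Q (x, t) = (exp (t D²) Q) (x)` be the solution of the heat equation with initial polynomial
`Q`. As `φ_{X ^ ℓ} (x, t) / ℓ!` is the sum of `x ^ α₃ t ^ α₄ / (α₃! α₄!)` over `α₃ + 2 α₄ = ℓ`, the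
system says that the weighted mean of `φ_Q` over the points `(p₃ j, p₄ j)` is `φ_Q (0, 0)` for every
`Q` of degree at most `2 m`. Hence it suffices to find, among the origin and the `m` points, one at
which some such `φ_Q` equals `1` while it vanishes at all the others: the positive weights then
force either all or none of the `p j` to be that point, so all of them are the origin.

A point of maximal time works. Linear algebra gives `Q ≠ 0` of degree at most `2 m` such that
`φ_Q (·, t)` has a double zero at every other point `(x, t)`. The heat flow does not increase the
number of real zeros, and a double zero loses both of its zeros at later times, since a square flows
to something positive. So by the last time all `2 m` zeros that `Q` may have are used up, and
`φ_Q` cannot also vanish at the remaining point.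
-/

section

open Polynomial MeasureTheory ProbabilityTheory
open scoped NNReal

/-! ### The heat semigroup on polynomials -/

section Algebra

variable {R : Type*} [CommSemiring R]

/-- The heat semigroup `exp (t D²)` on polynomials. The series is not used as the definition:
`exp (t D²)` fixes `1` and intertwines multiplication by `X` with the operator `X + 2 t D`, so it
sends `Q` to `Q (X + 2 t D)` applied to `1`. -/
noncomputable def heatFlow (t : R) : R[X] →ₗ[R] R[X] :=
  LinearMap.applyₗ 1 ∘ₗ
    (aeval (LinearMap.mulLeft R X + (2 * t) • (derivative : R[X] →ₗ[R] R[X]))).toLinearMap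

lemma heatFlow_one (t : R) : heatFlow t 1 = 1 := by
  simp [heatFlow]

lemma heatFlow_X_mul (t : R) (Q : R[X]) :
    heatFlow t (X * Q) = X * heatFlow t Q + C (2 * t) * derivative (heatFlow t Q) := by
  simp [heatFlow, smul_eq_C_mul]

lemma heatFlow_C_mul (t a : R) (Q : R[X]) : heatFlow t (C a * Q) = C a * heatFlow t Q := by
  simp only [← smul_eq_C_mul, map_smul]

lemma linearMap_ext_of_X_mul {M : Type*} [AddCommMonoid M] [Module R M] {f g : R[X] →ₗ[R] M}
    (h_one : f 1 = g 1) (h_X_mul : ∀ p, f p = g p → f (X * p) = g (X * p)) : f = g := by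
  refine lhom_ext' fun n => LinearMap.ext_ring ?_
  simp only [LinearMap.comp_apply, monomial_one_right_eq_X_pow]
  induction n with
  | zero => simpa using h_one
  | succ n ih => simpa only [pow_succ'] using h_X_mul _ ih

lemma derivative_heatFlow (t : R) (Q : R[X]) :
    derivative (heatFlow t Q) = heatFlow t (derivative Q) := by
  refine LinearMap.congr_fun (f := derivative ∘ₗ heatFlow t) (g := heatFlow t ∘ₗ derivative)
    (linearMap_ext_of_X_mul (by simp [heatFlow_one]) fun p hp => ?_) Q
  simp only [LinearMap.comp_apply] at hp ⊢
  simp only [heatFlow_X_mul, derivative_mul, derivative_X, derivative_C, map_add, one_mul, ← hp]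
  ring

lemma heatFlow_zero_time (Q : R[X]) : heatFlow 0 Q = Q :=
  LinearMap.congr_fun (g := LinearMap.id)
    (linearMap_ext_of_X_mul (heatFlow_one 0) fun p hp => by
      simpa [heatFlow_X_mul] using congrArg (X * ·) hp) Q

lemma heatFlow_heatFlow (s t : R) (Q : R[X]) :
    heatFlow s (heatFlow t Q) = heatFlow (s + t) Q := by
  refine LinearMap.congr_fun (f := heatFlow s ∘ₗ heatFlow t)
    (linearMap_ext_of_X_mul (by simp [heatFlow_one]) fun p hp => ?_) Q
  rw [LinearMap.comp_apply] at hp ⊢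
  simp only [heatFlow_X_mul, map_add, heatFlow_C_mul, ← derivative_heatFlow, hp]
  simp only [C_mul, C_add]
  ring

lemma natDegree_heatFlow_X_pow_le (t : R) (n : ℕ) : (heatFlow t (X ^ n)).natDegree ≤ n := by
  induction n with
  | zero => simp [heatFlow_one]
  | succ n ih =>
    rw [pow_succ', heatFlow_X_mul]
    refine natDegree_add_le_of_degree_le ?_ ?_
    · exact natDegree_mul_le.trans (by linarith [natDegree_X_le (R := R)])
    · refine (natDegree_C_mul_le _ _).trans ((natDegree_derivative_le _).trans ?_)
      omega

lemma natDegree_heatFlow_le (t : R) (Q : R[X]) : (heatFlow t Q).natDegree ≤ Q.natDegree := by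
  refine induction_with_natDegree_le (fun P => (heatFlow t P).natDegree ≤ Q.natDegree) _
    (by simp) (fun n a _ hn => ?_) (fun P P' _ _ hP hP' => ?_) Q le_rfl
  · rw [heatFlow_C_mul]
    exact (natDegree_C_mul_le _ _).trans ((natDegree_heatFlow_X_pow_le t n).trans hn)
  · rw [map_add]
    exact natDegree_add_le_of_degree_le hP hP'

end Algebra

lemma heatFlow_injective {R : Type*} [CommRing R] (t : R) : Function.Injective (heatFlow t) :=
  Function.LeftInverse.injective (g := heatFlow (-t)) fun Q => by
    rw [heatFlow_heatFlow, neg_add_cancel, heatFlow_zero_time]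

lemma heatFlow_ne_zero {R : Type*} [CommRing R] (t : R) {Q : R[X]} (hQ : Q ≠ 0) :
    heatFlow t Q ≠ 0 :=
  (map_ne_zero_iff _ (heatFlow_injective t)).2 hQ

section HeatPolynomials

variable {K : Type*} [Field K] [CharZero K]

lemma heatFlow_X_pow_eq_sum_iterate_derivative (t : K) {n N : ℕ} (h : n < 2 * N) :
    heatFlow t (X ^ n) =
      ∑ k ∈ range N, C (t ^ k / (k.factorial : K)) * derivative^[2 * k] (X ^ n) := by
  obtain ⟨N, rfl⟩ : ∃ M, N = M + 1 := Nat.exists_eq_add_one.2 (by omega)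
  induction n with
  | zero => simp [sum_range_succ', heatFlow_one, iterate_derivative_one]
  | succ n ih =>
    have shift : ∑ k ∈ range (N + 1), C (t ^ k / (k.factorial : K)) *
          ((2 * k) • derivative^[2 * k - 1] (X ^ n)) =
        C (2 * t) * derivative (∑ k ∈ range (N + 1),
          C (t ^ k / (k.factorial : K)) * derivative^[2 * k] (X ^ n)) := by
      have last : derivative^[2 * N + 1] (X ^ n : K[X]) = 0 :=
        iterate_derivative_eq_zero (by rw [natDegree_X_pow]; omega)
      rw [sum_range_succ', derivative_sum, sum_range_succ (n := N)]
      simp only [derivative_C_mul, ← Function.iterate_succ_apply', last]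
      simp only [mul_zero, zero_smul, add_zero, mul_sum]
      refine sum_congr rfl fun k _ => ?_
      rw [← mul_assoc, ← C_mul, nsmul_eq_mul, ← mul_assoc, ← C_eq_natCast, ← C_mul]
      congr 2
      rw [Nat.factorial_succ]
      push_cast
      field_simp
      ring
    rw [pow_succ', heatFlow_X_mul, ih (by omega), ← shift, mul_comm X (X ^ n), mul_sum,
      ← sum_add_distrib]
    refine sum_congr rfl fun k _ => ?_
    rw [iterate_derivative_mul_X]
    ring

lemma eval_heatFlow_X_pow (x t : K) (n : ℕ) :
    (heatFlow t (X ^ n)).eval x = n.factorial *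
      ∑ k ∈ range (n / 2 + 1), x ^ (n - 2 * k) * t ^ k /
        (((n - 2 * k).factorial : K) * (k.factorial : K)) := by
  rw [heatFlow_X_pow_eq_sum_iterate_derivative t (N := n / 2 + 1) (by omega), eval_finsetSum,
    mul_sum]
  refine sum_congr rfl fun k hk => ?_
  have hkn : 2 * k ≤ n := by have := mem_range.1 hk; omega
  rw [iterate_derivative_X_pow_eq_C_mul, ← Nat.factorial_mul_descFactorial hkn]
  have hk_factorial : (k.factorial : K) ≠ 0 := Nat.cast_ne_zero.2 k.factorial_ne_zero
  have hnk_factorial : ((n - 2 * k).factorial : K) ≠ 0 :=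
    Nat.cast_ne_zero.2 (Nat.factorial_ne_zero _)
  simp only [eval_mul, eval_C, eval_pow, eval_X, Nat.cast_mul]
  field_simp

end HeatPolynomials

/-! ### Positivity for positive times -/

lemma integrable_eval_gaussianReal (P : ℝ[X]) (μ : ℝ) (v : ℝ≥0) :
    Integrable (fun z => P.eval z) (gaussianReal μ v) := by
  simp only [eval_eq_sum_range]
  refine integrable_finsetSum _ fun n _ => Integrable.const_mul ?_ _
  exact integrable_pow_of_mem_interior_integrableExpSet (by simp) n

lemma hasDerivAt_gaussianPDFReal (μ : ℝ) (v : ℝ≥0) (z : ℝ) :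
    HasDerivAt (gaussianPDFReal μ v) (-((z - μ) / v) * gaussianPDFReal μ v z) z := by
  rw [gaussianPDFReal_def]
  have h := (((((hasDerivAt_id z).sub_const μ).pow 2).neg.div_const (2 * (v : ℝ))).exp).const_mul
    (√(2 * Real.pi * v))⁻¹
  refine h.congr_deriv ?_
  simp only [id_eq, Pi.neg_apply, Pi.pow_apply, Nat.cast_ofNat, Nat.add_one_sub_one]
  ring

lemma integrable_gaussianReal_iff {μ : ℝ} {v : ℝ≥0} (hv : v ≠ 0) {f : ℝ → ℝ} :
    Integrable f (gaussianReal μ v) ↔ Integrable fun z => gaussianPDFReal μ v z * f z := by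
  rw [gaussianReal_of_var_ne_zero μ hv, integrable_withDensity_iff_integrable_smul'
    (measurable_gaussianPDF μ v) (.of_forall fun _ => gaussianPDF_lt_top)]
  simp only [toReal_gaussianPDF, smul_eq_mul]

/-- The expectation of a polynomial under the Gaussian law with mean `μ` and variance `v`, as a
linear functional; it represents the heat flow for positive times. -/
noncomputable def gaussianExpectation (μ : ℝ) (v : ℝ≥0) : ℝ[X] →ₗ[ℝ] ℝ where
  toFun P := ∫ z, P.eval z ∂gaussianReal μ v
  map_add' P Q := by
    simpa only [eval_add] using
      integral_add (integrable_eval_gaussianReal P μ v) (integrable_eval_gaussianReal Q μ v)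
  map_smul' a P := by
    simpa only [eval_smul, smul_eq_mul, RingHom.id_apply] using integral_const_mul a _

lemma gaussianExpectation_X_mul (μ : ℝ) (v : ℝ≥0) (P : ℝ[X]) :
    gaussianExpectation μ v (X * P) =
      μ * gaussianExpectation μ v P + v * gaussianExpectation μ v (derivative P) := by
  rcases eq_or_ne v 0 with rfl | hv
  · simp [gaussianExpectation]
  have hv' : (v : ℝ) ≠ 0 := NNReal.coe_ne_zero.2 hv
  have hint (Q : ℝ[X]) : Integrable fun z => gaussianPDFReal μ v z * Q.eval z :=
    (integrable_gaussianReal_iff hv).1 (integrable_eval_gaussianReal Q μ v)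
  have hderiv (z : ℝ) : HasDerivAt (fun z => gaussianPDFReal μ v z * P.eval z)
      (gaussianPDFReal μ v z * (derivative P - C (v : ℝ)⁻¹ * ((X - C μ) * P)).eval z) z := by
    refine ((hasDerivAt_gaussianPDFReal μ v z).mul (P.hasDerivAt z)).congr_deriv ?_
    simp only [eval_sub, eval_mul, eval_C, eval_X]
    ring
  have hzero : gaussianExpectation μ v (derivative P - C (v : ℝ)⁻¹ * ((X - C μ) * P)) = 0 := by
    refine (integral_gaussianReal_eq_integral_smul hv).trans ?_
    exact integral_eq_zero_of_hasDerivAt_of_integrable hderiv (hint _) (hint P)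
  rw [sub_mul, ← smul_eq_C_mul, ← smul_eq_C_mul] at hzero
  simp only [map_sub, map_smul, smul_eq_mul] at hzero
  field_simp at hzero
  linarith

lemma linearMap_eq_of_map_X_mul_eq_add_derivative {R : Type*} [CommSemiring R]
    {f g : R[X] →ₗ[R] R} (a b : R)
    (h_one : f 1 = g 1) (hf : ∀ P, f (X * P) = a * f P + b * f (derivative P))
    (hg : ∀ P, g (X * P) = a * g P + b * g (derivative P)) : f = g := by
  refine lhom_ext' fun n => LinearMap.ext_ring ?_
  simp only [LinearMap.comp_apply, monomial_one_right_eq_X_pow]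
  induction n using Nat.strong_induction_on with
  | _ n ih =>
    rcases n with _ | n
    · simpa using h_one
    have ih_derivative : f (derivative (X ^ n)) = g (derivative (X ^ n)) := by
      rcases n with _ | n
      · simp
      · rw [derivative_X_pow, ← smul_eq_C_mul, map_smul, map_smul, ih _ (by omega)]
    rw [pow_succ', hf, hg, ih n n.lt_succ_self, ih_derivative]

lemma eval_heatFlow_eq_gaussianExpectation (t : ℝ≥0) (x : ℝ) (Q : ℝ[X]) :
    (heatFlow (t : ℝ) Q).eval x = gaussianExpectation x (2 * t) Q := by
  refine LinearMap.congr_fun (f := leval x ∘ₗ heatFlow (t : ℝ))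
    (linearMap_eq_of_map_X_mul_eq_add_derivative x (2 * t) ?_ (fun P => ?_) fun P => ?_) Q
  · simp [heatFlow_one, gaussianExpectation]
  · simp [heatFlow_X_mul, derivative_heatFlow]
  · simp [gaussianExpectation_X_mul]

lemma eval_heatFlow_pos {t : ℝ} (ht : 0 < t) {Q : ℝ[X]} (hQ : Q ≠ 0) (hnonneg : ∀ z, 0 ≤ Q.eval z)
    (x : ℝ) : 0 < (heatFlow t Q).eval x := by
  lift t to ℝ≥0 using ht.le
  have ht' : 2 * t ≠ 0 := by simpa using ht.ne'
  have : (gaussianReal x (2 * t)).IsOpenPosMeasure :=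
    (gaussianReal_absolutelyContinuous' x ht').isOpenPosMeasure
  obtain ⟨z, hz⟩ : ∃ z, Q.eval z ≠ 0 := by
    by_contra! h
    exact hQ (Polynomial.funext (by simpa using h))
  rw [eval_heatFlow_eq_gaussianExpectation]
  exact integral_pos_of_integrable_nonneg_nonzero (by fun_prop)
    (integrable_eval_gaussianReal Q x (2 * t)) hnonneg hz

/-! ### Real zeros under the heat flow -/

lemma card_toFinset_roots_le_card_sdiff (W : ℝ[X]) {p : ℝ[X]} (hp : p ≠ 0)
    (hq : derivative W * p + derivative p ≠ 0) :
    #p.roots.toFinset ≤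
      #((derivative W * p + derivative p).roots.toFinset \ p.roots.toFinset) + 1 := by
  refine card_le_sdiff_of_interleaved fun x hx y hy hxy _ => ?_
  rw [Multiset.mem_toFinset, mem_roots hp, IsRoot] at hx hy
  have hderiv (z : ℝ) : HasDerivAt (fun z => p.eval z * Real.exp (W.eval z))
      ((derivative W * p + derivative p).eval z * Real.exp (W.eval z)) z := by
    refine ((p.hasDerivAt z).mul (W.hasDerivAt z).exp).congr_deriv ?_
    simp only [eval_add, eval_mul]
    ring
  obtain ⟨z, hz, hz_zero⟩ := exists_hasDerivAt_eq_zero hxy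
    (fun z _ => (hderiv z).continuousAt.continuousWithinAt) (by simp [hx, hy]) fun z _ => hderiv z
  rw [mul_eq_zero, or_iff_left (Real.exp_ne_zero _)] at hz_zero
  exact ⟨z, by rwa [Multiset.mem_toFinset, mem_roots hq], hz⟩

lemma rootMultiplicity_sub_one_le_rootMultiplicity_mul_add_derivative {R : Type*} [CommRing R]
    (V : R[X]) {p : R[X]} (hq : V * p + derivative p ≠ 0) (x : R) :
    p.rootMultiplicity x - 1 ≤ (V * p + derivative p).rootMultiplicity x := by
  rw [le_rootMultiplicity_iff hq]
  have hp : (X - C x) ^ (p.rootMultiplicity x - 1) ∣ p :=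
    (pow_dvd_pow _ (Nat.sub_le _ _)).trans (pow_rootMultiplicity_dvd p x)
  have hp' : (X - C x) ^ (p.rootMultiplicity x - 1) ∣ derivative p :=
    pow_sub_one_dvd_derivative_of_pow_dvd (pow_rootMultiplicity_dvd p x)
  exact (hp.mul_left V).add hp'

lemma card_roots_le_card_roots_mul_add_derivative (W : ℝ[X]) {p : ℝ[X]} (hp : p ≠ 0)
    (hq : derivative W * p + derivative p ≠ 0) :
    p.roots.card ≤ (derivative W * p + derivative p).roots.card + 1 := by
  set q := derivative W * p + derivative p with hq_def
  have hle : p.roots - p.roots.toFinset.val + (q.roots.toFinset \ p.roots.toFinset).val ≤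
      q.roots := by
    refine Multiset.le_iff_count.2 fun x => ?_
    have hmult :=
      rootMultiplicity_sub_one_le_rootMultiplicity_mul_add_derivative (derivative W) hq x
    rw [Multiset.count_add, Multiset.count_sub, Multiset.count_eq_of_nodup (nodup _),
      Multiset.count_eq_of_nodup (nodup _)]
    simp only [mem_val, mem_sdiff, Multiset.mem_toFinset, count_roots, ← hq_def] at hmult ⊢
    by_cases hpx : x ∈ p.roots
    · simpa [hpx] using hmult
    · have hpx' : p.rootMultiplicity x = 0 := by rwa [← count_roots, Multiset.count_eq_zero]
      by_cases hqx : x ∈ q.roots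
      · have hqx' : 1 ≤ q.rootMultiplicity x := by
          rwa [← count_roots, Multiset.one_le_count_iff_mem]
        simpa [hpx, hqx, hpx'] using hqx'
      · simp [hpx, hqx, hpx']
  have hcard := Multiset.card_le_card hle
  rw [Multiset.card_add, Multiset.toFinset_val, Multiset.card_sub (Multiset.dedup_le _)] at hcard
  have hrolle := card_toFinset_roots_le_card_sdiff W hp hq
  simp only [← hq_def, card_def, Multiset.toFinset_val] at hrolle hcard
  omega

lemma card_roots_heatFlow_le_card_roots_heatFlow_X_sub_C_mul {t : ℝ} (ht : 0 < t) (a : ℝ)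
    {Q : ℝ[X]} (hQ : Q ≠ 0) :
    (heatFlow t Q).roots.card ≤ (heatFlow t ((X - C a) * Q)).roots.card + 1 := by
  have ht' : 2 * t ≠ 0 := by positivity
  -- The commutation relation exhibits `heatFlow t ((X - a) Q)` as `2 t exp (-W) D exp W` applied
  -- to `heatFlow t Q`, with `W = (X - a)² / 4t`.
  have hflow : heatFlow t ((X - C a) * Q) =
      C (2 * t) * (derivative (C (4 * t)⁻¹ * (X - C a) ^ 2) * heatFlow t Q +
        derivative (heatFlow t Q)) := by
    have hC : (C (2 * t) * C (4 * t)⁻¹ * C 2 : ℝ[X]) = 1 := by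
      rw [← C_mul, ← C_mul, ← C_1]
      congr 1
      field_simp
      norm_num
    rw [sub_mul, map_sub, heatFlow_X_mul, heatFlow_C_mul, derivative_C_mul, derivative_X_sub_C_sq]
    linear_combination (C a - X) * heatFlow t Q * hC
  have hne := heatFlow_ne_zero t (mul_ne_zero (X_sub_C_ne_zero a) hQ)
  rw [hflow] at hne ⊢
  rw [roots_C_mul _ ht']
  exact card_roots_le_card_roots_mul_add_derivative _ (heatFlow_ne_zero t hQ)
    (right_ne_zero_of_mul hne)

lemma eval_nonneg_or_eval_nonpos_of_roots_eq_zero {g : ℝ[X]} (hg : g.roots = 0) :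
    (∀ x, 0 ≤ g.eval x) ∨ ∀ x, g.eval x ≤ 0 := by
  by_contra! h
  obtain ⟨⟨x, hx⟩, y, hy⟩ := h
  obtain ⟨z, hz⟩ := mem_range_of_exists_le_of_exists_ge g.continuous ⟨x, hx.le⟩ ⟨y, hy.le⟩
  have hz_mem : z ∈ g.roots := (mem_roots (by rintro rfl; simp at hx)).2 hz
  simp [hg] at hz_mem

lemma roots_heatFlow_sq_mul_eq_zero {t : ℝ} (ht : 0 < t) {S g : ℝ[X]} (hS : S ≠ 0) (hg₀ : g ≠ 0)
    (hg : g.roots = 0) : (heatFlow t (S ^ 2 * g)).roots = 0 := by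
  refine Multiset.eq_zero_of_forall_notMem fun x hx => ?_
  have hx_zero : (heatFlow t (S ^ 2 * g)).eval x = 0 := (mem_roots'.1 hx).2
  have hS_sq : S ^ 2 ≠ 0 := pow_ne_zero 2 hS
  rcases eval_nonneg_or_eval_nonpos_of_roots_eq_zero hg with h | h
  · refine (eval_heatFlow_pos ht (mul_ne_zero hS_sq hg₀) (fun z => ?_) x).ne' hx_zero
    rw [eval_mul, eval_pow]
    exact mul_nonneg (sq_nonneg _) (h z)
  · refine (eval_heatFlow_pos ht (mul_ne_zero hS_sq (neg_ne_zero.2 hg₀)) (fun z => ?_) x).ne' ?_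
    · rw [eval_mul, eval_pow, eval_neg]
      exact mul_nonneg (sq_nonneg _) (neg_nonneg.2 (h z))
    · rw [mul_neg, map_neg, eval_neg, hx_zero, neg_zero]

lemma card_roots_heatFlow_sq_mul_prod_le {t : ℝ} (ht : 0 < t) {g : ℝ[X]} (hg₀ : g ≠ 0)
    (hg : g.roots = 0) (s : Multiset ℝ) {S : ℝ[X]} (hS : S ≠ 0) :
    (heatFlow t (S ^ 2 * ((s.map fun a => X - C a).prod * g))).roots.card ≤ s.card := by
  induction s using Multiset.induction_on generalizing S with
  | empty => simp [roots_heatFlow_sq_mul_eq_zero ht hS hg₀ hg]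
  | cons a s ih =>
    have hprod : ((a ::ₘ s).map fun a => (X - C a : ℝ[X])).prod ≠ 0 :=
      (monic_multiset_prod_of_monic _ _ fun a _ => monic_X_sub_C a).ne_zero
    have hrolle := card_roots_heatFlow_le_card_roots_heatFlow_X_sub_C_mul ht a
      (mul_ne_zero (pow_ne_zero 2 hS) (mul_ne_zero hprod hg₀))
    have hsq : (X - C a) * (S ^ 2 * (((a ::ₘ s).map fun a => X - C a).prod * g)) =
        (S * (X - C a)) ^ 2 * ((s.map fun a => X - C a).prod * g) := by
      rw [Multiset.map_cons, Multiset.prod_cons]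
      ring
    rw [hsq] at hrolle
    rw [Multiset.card_cons]
    exact hrolle.trans (Nat.succ_le_succ (ih (mul_ne_zero hS (X_sub_C_ne_zero a))))

lemma card_roots_heatFlow_sq_mul_le {t : ℝ} (ht : 0 < t) {S G : ℝ[X]} (hS : S ≠ 0) (hG : G ≠ 0) :
    (heatFlow t (S ^ 2 * G)).roots.card ≤ G.roots.card := by
  obtain ⟨g, hGg, -, hg⟩ := exists_prod_multiset_X_sub_C_mul G
  have hg₀ : g ≠ 0 := by
    rintro rfl
    exact hG (by rw [← hGg, mul_zero])
  conv_lhs => rw [← hGg]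
  exact card_roots_heatFlow_sq_mul_prod_le ht hg₀ hg G.roots hS

lemma card_roots_heatFlow_add_two_mul_card_le {t : ℝ} (ht : 0 < t) {F : ℝ[X]} (hF : F ≠ 0)
    {A : Finset ℝ} (hA : ∀ z ∈ A, 2 ≤ F.rootMultiplicity z) :
    (heatFlow t F).roots.card + 2 * #A ≤ F.roots.card := by
  have hS : (∏ z ∈ A, (X - C z : ℝ[X])) ≠ 0 := (monic_prod_X_sub_C _ A).ne_zero
  obtain ⟨G, rfl⟩ : (∏ z ∈ A, (X - C z)) ^ 2 ∣ F := by
    rw [← prod_pow]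
    refine prod_dvd_of_coprime (fun x _ y _ hxy => ?_) fun z hz =>
      (le_rootMultiplicity_iff hF).1 (hA z hz)
    exact (isCoprime_X_sub_C_of_isUnit_sub (sub_ne_zero.2 hxy).isUnit).pow
  have hcard : ((∏ z ∈ A, (X - C z)) ^ 2 * G).roots.card = 2 * #A + G.roots.card := by
    simp [roots_mul hF, roots_pow, roots_prod_X_sub_C]
  have hflow := card_roots_heatFlow_sq_mul_le ht hS (right_ne_zero_of_mul hF)
  omega

/-! ### Double zeros in space-time -/

/-- The space coordinates of the points of `P` at time `t`; points are pairs `(location, time)`. -/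
noncomputable def locationsAt (P : Finset (ℝ × ℝ)) (t : ℝ) : Finset ℝ :=
  (P.filter (·.2 = t)).image Prod.fst

lemma mem_locationsAt {P : Finset (ℝ × ℝ)} {z t : ℝ} : z ∈ locationsAt P t ↔ (z, t) ∈ P := by
  simp [locationsAt]

lemma card_locationsAt (P : Finset (ℝ × ℝ)) (t : ℝ) :
    #(locationsAt P t) = #{p ∈ P | p.2 = t} := by
  refine card_image_of_injOn fun p hp q hq hpq => Prod.ext hpq ?_
  rw [(mem_filter.1 hp).2, (mem_filter.1 hq).2]

lemma card_roots_heatFlow_add_two_mul_sum_card_le {Q : ℝ[X]} (hQ : Q ≠ 0) {A : ℝ → Finset ℝ}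
    (T : Finset ℝ) (hA : ∀ s ∈ T, ∀ z ∈ A s, 2 ≤ (heatFlow s Q).rootMultiplicity z)
    {t : ℝ} (hT : ∀ s ∈ T, s < t) :
    (heatFlow t Q).roots.card + 2 * ∑ s ∈ T, #(A s) ≤ Q.natDegree := by
  induction T using Finset.induction_on_max generalizing t with
  | empty => simpa using (card_roots' _).trans (natDegree_heatFlow_le t Q)
  | insert s T hs ih =>
    have hpast := ih (fun r hr => hA r (mem_insert_of_mem hr)) hs
    have hstep := card_roots_heatFlow_add_two_mul_card_le (sub_pos.2 (hT s (mem_insert_self s T)))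
      (heatFlow_ne_zero s hQ) (hA s (mem_insert_self s T))
    rw [heatFlow_heatFlow, sub_add_cancel] at hstep
    rw [sum_insert fun hsT => (hs s hsT).false]
    omega

lemma two_mul_card_lt_card_roots {R : Type*} [CommRing R] [IsDomain R] {F : R[X]} (hF : F ≠ 0)
    {A : Finset R} (hA : ∀ z ∈ A, 2 ≤ F.rootMultiplicity z) {y : R} (hy : F.IsRoot y)
    (hyA : y ∉ A) : 2 * #A < F.roots.card := by
  classical
  have hle : y ::ₘ 2 • A.val ≤ F.roots := by
    refine Multiset.le_iff_count.2 fun z => ?_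
    rw [count_roots, Multiset.count_cons, Multiset.count_nsmul, Multiset.count_eq_of_nodup A.nodup]
    by_cases hzA : z ∈ A
    · have hzy : z ≠ y := fun h => hyA (h ▸ hzA)
      simpa [hzA, hzy] using hA z hzA
    · have hy_pos := (rootMultiplicity_pos hF).2 hy
      by_cases hzy : z = y
      · subst hzy
        simpa [hzA] using Nat.one_le_iff_ne_zero.2 hy_pos.ne'
      · simp [hzA, hzy]
  have hcard := Multiset.card_le_card hle
  rw [Multiset.card_cons, Multiset.card_nsmul, card_val] at hcard
  omega

lemma exists_ne_zero_natDegree_le_forall_eq_zero {K ι : Type*} [Field K] [Fintype ι] {n : ℕ}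
    (hn : Fintype.card ι ≤ n) (f : ι → K[X] →ₗ[K] K) :
    ∃ Q : K[X], Q ≠ 0 ∧ Q.natDegree ≤ n ∧ ∀ i, f i Q = 0 := by
  have : Module.Finite K (degreeLT K (n + 1)) := .equiv (degreeLTEquiv K (n + 1)).symm
  obtain ⟨Q, hQ, hQ₀⟩ := (Submodule.ne_bot_iff _).1 <| LinearMap.ker_ne_bot_of_finrank_lt
    (f := LinearMap.pi f ∘ₗ (degreeLT K (n + 1)).subtype) <| by
      rw [(degreeLTEquiv K (n + 1)).finrank_eq]
      simpa using Nat.lt_succ_of_le hn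
  have hQ₀' : (Q : K[X]) ≠ 0 := by simpa using hQ₀
  have hdeg : (Q : K[X]).natDegree < n + 1 :=
    (natDegree_lt_iff_degree_lt hQ₀').2 (mem_degreeLT.1 Q.2)
  exact ⟨Q, hQ₀', Nat.lt_succ_iff.1 hdeg, fun i => congrFun (LinearMap.mem_ker.1 hQ) i⟩

lemma exists_forall_two_le_rootMultiplicity_heatFlow (P : Finset (ℝ × ℝ)) :
    ∃ Q : ℝ[X], Q ≠ 0 ∧ Q.natDegree ≤ 2 * #P ∧
      ∀ p ∈ P, 2 ≤ (heatFlow p.2 Q).rootMultiplicity p.1 := by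
  obtain ⟨Q, hQ, hdeg, hzero⟩ := exists_ne_zero_natDegree_le_forall_eq_zero
    (ι := P ⊕ P) (n := 2 * #P) (by simp [two_mul])
    (Sum.elim (fun p => leval p.1.1 ∘ₗ heatFlow p.1.2)
      fun p => leval p.1.1 ∘ₗ derivative ∘ₗ heatFlow p.1.2)
  refine ⟨Q, hQ, hdeg, fun p hp => ?_⟩
  exact (one_lt_rootMultiplicity_iff_isRoot (heatFlow_ne_zero p.2 hQ)).2
    ⟨hzero (.inl ⟨p, hp⟩), hzero (.inr ⟨p, hp⟩)⟩

lemma exists_eval_heatFlow_eq_zero_and_ne_zero (P : Finset (ℝ × ℝ)) {m : ℝ × ℝ} (hm : m ∉ P)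
    (hlast : ∀ p ∈ P, p.2 ≤ m.2) :
    ∃ Q : ℝ[X], Q.natDegree ≤ 2 * #P ∧ (∀ p ∈ P, (heatFlow p.2 Q).eval p.1 = 0) ∧
      (heatFlow m.2 Q).eval m.1 ≠ 0 := by
  obtain ⟨Q, hQ, hdeg, hdouble⟩ := exists_forall_two_le_rootMultiplicity_heatFlow P
  refine ⟨Q, hdeg, fun p hp => ?_, fun hm_zero => ?_⟩
  · exact (rootMultiplicity_pos (heatFlow_ne_zero p.2 hQ)).1 (two_pos.trans_le (hdouble p hp))
  set T := P.image Prod.snd with hT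
  have hdouble' (s : ℝ) : ∀ z ∈ locationsAt P s, 2 ≤ (heatFlow s Q).rootMultiplicity z :=
    fun z hz => hdouble (z, s) (mem_locationsAt.1 hz)
  have hpast := card_roots_heatFlow_add_two_mul_sum_card_le hQ (T.erase m.2)
    (fun s _ => hdouble' s) (t := m.2) fun s hs => by
      obtain ⟨hsm, hsT⟩ := mem_erase.1 hs
      obtain ⟨p, hp, rfl⟩ := mem_image.1 hsT
      exact (hlast p hp).lt_of_ne hsm
  have hnow := two_mul_card_lt_card_roots (heatFlow_ne_zero m.2 hQ) (hdouble' m.2) hm_zero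
    (mt mem_locationsAt.1 hm)
  have hcard : #P = ∑ s ∈ T.erase m.2, #(locationsAt P s) + #(locationsAt P m.2) := by
    simp only [card_locationsAt]
    rw [card_eq_sum_card_image Prod.snd P, ← hT]
    by_cases hmT : m.2 ∈ T
    · exact (sum_erase_add _ _ hmT).symm
    · have hnone : #{p ∈ P | p.2 = m.2} = 0 :=
        card_eq_zero.2 (filter_eq_empty_iff.2 fun p hp hpm => hmT (hpm ▸ mem_image_of_mem _ hp))
      rw [erase_eq_of_notMem hmT, hnone, add_zero]
  omega

lemma exists_natDegree_le_eval_heatFlow_eq_ite {S : Finset (ℝ × ℝ)} (hS : S.Nonempty) :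
    ∃ m ∈ S, ∃ Q : ℝ[X], Q.natDegree ≤ 2 * (#S - 1) ∧
      ∀ p ∈ S, (heatFlow p.2 Q).eval p.1 = if p = m then 1 else 0 := by
  obtain ⟨m, hm, hlast⟩ := exists_max_image S Prod.snd hS
  obtain ⟨Q, hdeg, hzero, hm_ne⟩ := exists_eval_heatFlow_eq_zero_and_ne_zero (S.erase m)
    (notMem_erase m S) fun p hp => hlast p (mem_of_mem_erase hp)
  rw [card_erase_of_mem hm] at hdeg
  refine ⟨m, hm, C ((heatFlow m.2 Q).eval m.1)⁻¹ * Q, (natDegree_C_mul_le _ _).trans hdeg,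
    fun p hp => ?_⟩
  rw [heatFlow_C_mul, eval_mul, eval_C]
  split_ifs with hpm
  · rw [hpm, inv_mul_cancel₀ hm_ne]
  · rw [hzero p (mem_erase.2 ⟨hpm, hp⟩), mul_zero]

/-! ### Weighted means of heat polynomials -/

lemma sum_mul_eval_heatFlow_eq {ι K : Type*} [Fintype ι] [Field K] [CharZero K]
    {p₃ p₄ c : ι → K} {N : ℕ}
    (h : ∀ ℓ : ℕ, 1 ≤ ℓ → ℓ ≤ N →
      ∑ j, ∑ α₄ ∈ range (ℓ / 2 + 1), c j * p₃ j ^ (ℓ - 2 * α₄) * p₄ j ^ α₄ /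
        (((ℓ - 2 * α₄).factorial : K) * (α₄.factorial : K)) = 0)
    {Q : K[X]} (hQ : Q.natDegree ≤ N) :
    ∑ j, c j * (heatFlow (p₄ j) Q).eval (p₃ j) = (∑ j, c j) * (heatFlow 0 Q).eval 0 := by
  rw [heatFlow_zero_time]
  refine induction_with_natDegree_le
    (fun Q => ∑ j, c j * (heatFlow (p₄ j) Q).eval (p₃ j) = (∑ j, c j) * Q.eval 0) N
    (by simp) (fun ℓ a _ hℓ => ?_) (fun P P' _ _ hP hP' => ?_) Q hQ
  · rcases Nat.eq_zero_or_pos ℓ with rfl | hℓ_pos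
    · have hC (t : K) : heatFlow t (C a) = C a := by
        simpa [heatFlow_one] using heatFlow_C_mul t a 1
      simp [hC, sum_mul]
    · have hterm (j : ι) : c j * (heatFlow (p₄ j) (C a * X ^ ℓ)).eval (p₃ j) =
          a * ℓ.factorial * ∑ α₄ ∈ range (ℓ / 2 + 1), c j * p₃ j ^ (ℓ - 2 * α₄) * p₄ j ^ α₄ /
            (((ℓ - 2 * α₄).factorial : K) * (α₄.factorial : K)) := by
        simp only [heatFlow_C_mul, eval_mul, eval_C, eval_heatFlow_X_pow, mul_assoc, mul_div_assoc,
          ← mul_sum]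
        ring
      simp [hterm, ← mul_sum, h ℓ hℓ_pos hℓ, hℓ_pos.ne']
  · simp only [map_add, eval_add, mul_add, sum_add_distrib, hP, hP']

lemma forall_iff_of_sum_mul_ite_eq {ι R : Type*} [Fintype ι] [Semiring R] [PartialOrder R]
    [IsStrictOrderedRing R] {c : ι → R} (hc : ∀ j, 0 < c j)
    {p : ι → Prop} {q : Prop} [DecidablePred p] [Decidable q]
    (h : ∑ j, c j * (if p j then 1 else 0) = (∑ j, c j) * if q then 1 else 0) (j : ι) :
    p j ↔ q := by
  by_cases hq : q
  · have hle (j : ι) : c j * (if p j then 1 else 0) ≤ c j := by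
      split_ifs <;> simp [(hc j).le]
    rw [if_pos hq, mul_one, sum_eq_sum_iff_of_le fun j _ => hle j] at h
    simpa [hq, (hc j).ne] using h j (mem_univ j)
  · have hnonneg (j : ι) : 0 ≤ c j * (if p j then 1 else 0) := by
      split_ifs <;> simp [(hc j).le]
    rw [if_neg hq, mul_zero, sum_eq_zero_iff_of_nonneg fun j _ => hnonneg j] at h
    simpa [hq, (hc j).ne'] using h j (mem_univ j)

end

theorem no_nontrivial_solution_m_three_r_six_general {ι : Type*} [Fintype ι]
    (p₃ p₄ c : ι → ℝ) (hc : ∀ j, 0 < c j)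
    (h : ∀ ℓ : ℕ, 1 ≤ ℓ → ℓ ≤ 2 * Fintype.card ι →
      ∑ j, ∑ α₄ ∈ range (ℓ / 2 + 1),
        c j * p₃ j ^ (ℓ - 2 * α₄) * p₄ j ^ α₄ /
          (((ℓ - 2 * α₄).factorial : ℝ) * (α₄.factorial : ℝ)) = 0) :
    ∀ j, p₃ j = 0 ∧ p₄ j = 0 := by
  set S : Finset (ℝ × ℝ) := insert 0 (univ.image fun j => (p₃ j, p₄ j))
  have hpS (j : ι) : (p₃ j, p₄ j) ∈ S := mem_insert_of_mem (mem_image_of_mem _ (mem_univ j))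
  have h0S : (0, 0) ∈ S := mem_insert_self _ _
  have hcard : #S - 1 ≤ Fintype.card ι :=
    Nat.sub_le_of_le_add ((card_insert_le _ _).trans (Nat.succ_le_succ card_image_le))
  obtain ⟨m, hmS, Q, hdeg, hQ⟩ := exists_natDegree_le_eval_heatFlow_eq_ite ⟨_, h0S⟩
  have hsum := sum_mul_eval_heatFlow_eq h (hdeg.trans (Nat.mul_le_mul_left 2 hcard))
  simp only [hQ _ (hpS _), hQ _ h0S] at hsum
  have hiff : ∀ j, (p₃ j, p₄ j) = m ↔ (0, 0) = m := forall_iff_of_sum_mul_ite_eq hc hsum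
  have hm : (0, 0) = m := by
    rcases mem_insert.1 hmS with hm | hm
    · exact hm.symm
    · obtain ⟨j, -, hj⟩ := mem_image.1 hm
      exact (hiff j).1 hj
  exact fun j => Prod.mk.inj (((hiff j).2 hm).trans hm.symm)

/-- The location-scale Gaussian mixture polynomial system with m = 3 components and
order r = 6 has no non-trivial solution: if all cⱼ > 0 and for every 1 ≤ ℓ ≤ 6 we
have Σⱼ Σ_{α₃+2α₄=ℓ} cⱼ p₃ⱼ^{α₃} p₄ⱼ^{α₄} / (α₃! α₄!) = 0, then all p₃ⱼ, p₄ⱼ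
vanish. (The inner sum is parameterized by α₄, with α₃ = ℓ - 2α₄.) -/
theorem no_nontrivial_solution_m_three_r_six
    (p₃ p₄ c : Fin 3 → ℝ) (hc : ∀ j, 0 < c j)
    (h : ∀ ℓ : ℕ, 1 ≤ ℓ → ℓ ≤ 6 →
      ∑ j, ∑ α₄ ∈ Finset.range (ℓ / 2 + 1),
        c j * p₃ j ^ (ℓ - 2 * α₄) * p₄ j ^ α₄ /
          ((Nat.factorial (ℓ - 2 * α₄) : ℝ) * (Nat.factorial α₄ : ℝ)) = 0) :
    ∀ j, p₃ j = 0 ∧ p₄ j = 0 :=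
  no_nontrivial_solution_m_three_r_six_general p₃ p₄ c hc fun ℓ hℓ hℓ' =>
    h ℓ hℓ (by simpa using hℓ')
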